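/- Let (η, α, U, A, φ, σ) be a solution of the Gowdy symmetric IIA system on (T₋,T₊) with 0 < T₋ < t_i < T₊ < ∞. Then the energy E(t) is differentiable and dE/dt = −∫_{S¹} (1/(√α · t)) (2U̇² + (e^{4U}/(2t²))αA'² + φ̇²/2 + (e^{2λφ}/2)σ̇²) dθ ≤ 0; in particular E is monotonically nonincreasing, so E(t) ≤ E(t_i) for all t ∈ [t_i,T₊). Moreover dE/dt ≥ −(4/t)E, hence E(t) ≤ E(t_i)(t_i/t)⁴ for all t ∈ (T₋,t_i], E is bounded on (T₋,T₊), and the limit E₋ := lim_{t→T₋} E(t) exists. -/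

import Mathlib

/-!
The energy identity is the integral over the circle of a local conservation law with a sink,
`∂ₜ(density) = ∂_θ(flux) - dissipation` (`pt_energyDensity`). Expanding `∂ₜ` of the density and
inserting the evolution equations, the second spatial derivatives and the terms in `∂_θ α` assemble
into the `θ`-derivative of `energyFlux`. The remaining factor `∂ₜ α / (2α)` multiplies the whole
density and is cancelled, by the equation for `α` and the `t`-constraint, by the term in `∂ₜ η`
coming from the exponential; the explicit factors `1 / t` leave minus the dissipation. Since the
solution is smooth, one may differentiate under the integral sign, and periodicity makes the flux
integrate to zero, which gives `dE/dt` (`hasDerivAt_energyE`).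

The dissipation is pointwise nonnegative and at most `4 / t` times the density. Hence `E` is
nonincreasing and `t⁴ E(t)` is nondecreasing, so `E` is monotone and bounded near `Tm`, and the
remaining claims follow (`decay_of_deriv_bounds`).
-/


noncomputable section

open Real Set MeasureTheory Filter

/-- Partial derivative in the first (time) variable. -/
def pt (f : ℝ → ℝ → ℝ) : ℝ → ℝ → ℝ := fun t θ => deriv (fun s => f s θ) t

/-- Partial derivative in the second (angle) variable. -/
def pth (f : ℝ → ℝ → ℝ) : ℝ → ℝ → ℝ := fun t θ => deriv (fun x => f t x) θ

/-- The full Gowdy symmetric IIA system (both constraints, the equation for `α`,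
and the four evolution equations) holding at all times in `S` (dot = `pt`,
prime = `pth`). -/
structure IsGowdyIIA (Q lam : ℝ) (S : Set ℝ) (η α U A φ σ : ℝ → ℝ → ℝ) : Prop where
  alpha_pos : ∀ t ∈ S, ∀ θ : ℝ, 0 < α t θ
  constraint_t : ∀ t ∈ S, ∀ θ : ℝ,
    pt η t θ / t =
      (pt U t θ) ^ 2 + α t θ * (pth U t θ) ^ 2
      + exp (4 * U t θ) / (4 * t ^ 2) * ((pt A t θ) ^ 2 + α t θ * (pth A t θ) ^ 2)
      + (1 / 4) * ((pt φ t θ) ^ 2 + α t θ * (pth φ t θ) ^ 2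
          + exp (2 * lam * φ t θ) * ((pt σ t θ) ^ 2 + α t θ * (pth σ t θ) ^ 2)
          + α t θ * Q ^ 2 * exp (2 * lam * φ t θ + 2 * (η t θ - U t θ)))
  constraint_θ : ∀ t ∈ S, ∀ θ : ℝ,
    pth η t θ / t =
      2 * pt U t θ * pth U t θ
      + exp (4 * U t θ) / (2 * t ^ 2) * (pt A t θ * pth A t θ)
      - pth α t θ / (2 * t * α t θ)
      + (1 / 2) * (pt φ t θ * pth φ t θ
          + exp (2 * lam * φ t θ) * (pt σ t θ * pth σ t θ))
  constraint_α : ∀ t ∈ S, ∀ θ : ℝ,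
    pt α t θ = - t * (α t θ) ^ 2 * Q ^ 2 * exp (2 * lam * φ t θ + 2 * (η t θ - U t θ))
  evol_U : ∀ t ∈ S, ∀ θ : ℝ,
    pt (pt U) t θ - α t θ * pth (pth U) t θ =
      - pt U t θ / t + pt α t θ * pt U t θ / (2 * α t θ) + pth α t θ * pth U t θ / 2
      + exp (4 * U t θ) / (2 * t ^ 2) * ((pt A t θ) ^ 2 - α t θ * (pth A t θ) ^ 2)
      + (1 / 4) * α t θ * Q ^ 2 * exp (2 * lam * φ t θ + 2 * (η t θ - U t θ))
  evol_A : ∀ t ∈ S, ∀ θ : ℝ,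
    pt (pt A) t θ - α t θ * pth (pth A) t θ =
      pt A t θ / t + pt α t θ * pt A t θ / (2 * α t θ) + pth α t θ * pth A t θ / 2
      - 4 * (pt A t θ * pt U t θ - α t θ * pth A t θ * pth U t θ)
  evol_φ : ∀ t ∈ S, ∀ θ : ℝ,
    pt (pt φ) t θ - α t θ * pth (pth φ) t θ =
      - pt φ t θ / t + pt α t θ * pt φ t θ / (2 * α t θ) + pth α t θ * pth φ t θ / 2
      + lam * exp (2 * lam * φ t θ) * ((pt σ t θ) ^ 2 - α t θ * (pth σ t θ) ^ 2)
      - lam * α t θ * Q ^ 2 * exp (2 * lam * φ t θ + 2 * (η t θ - U t θ))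
  evol_σ : ∀ t ∈ S, ∀ θ : ℝ,
    pt (pt σ) t θ - α t θ * pth (pth σ) t θ =
      - pt σ t θ / t + pt α t θ * pt σ t θ / (2 * α t θ) + pth α t θ * pth σ t θ / 2
      - 2 * lam * (pt φ t θ * pt σ t θ - α t θ * pth φ t θ * pth σ t θ)

/-- A smooth, spatially `2π`-periodic solution of the Gowdy symmetric IIA system
on the areal time interval `(Tm, Tp)`. -/
structure GowdySolution (Q lam Tm Tp : ℝ) where
  η : ℝ → ℝ → ℝ
  α : ℝ → ℝ → ℝ
  U : ℝ → ℝ → ℝ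
  A : ℝ → ℝ → ℝ
  φ : ℝ → ℝ → ℝ
  σ : ℝ → ℝ → ℝ
  smooth : ∀ f ∈ ([η, α, U, A, φ, σ] : List (ℝ → ℝ → ℝ)),
    ContDiffOn ℝ (⊤ : ℕ∞) (fun p : ℝ × ℝ => f p.1 p.2) (Ioo Tm Tp ×ˢ (univ : Set ℝ))
  periodic : ∀ f ∈ ([η, α, U, A, φ, σ] : List (ℝ → ℝ → ℝ)), ∀ t θ : ℝ,
    f t (θ + 2 * π) = f t θ
  sys : IsGowdyIIA Q lam (Ioo Tm Tp) η α U A φ σ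

/-- The energy density `𝓔`. -/
def calE (lam : ℝ) (α U A φ σ : ℝ → ℝ → ℝ) (t θ : ℝ) : ℝ :=
  (pt U t θ) ^ 2 + α t θ * (pth U t θ) ^ 2
  + exp (4 * U t θ) / (4 * t ^ 2) * ((pt A t θ) ^ 2 + α t θ * (pth A t θ) ^ 2)
  + (1 / 4) * ((pt φ t θ) ^ 2 + α t θ * (pth φ t θ) ^ 2
      + exp (2 * lam * φ t θ) * ((pt σ t θ) ^ 2 + α t θ * (pth σ t θ) ^ 2))

/-- The energy `E(t)` (integral over the circle `S¹ = [0, 2π]`). -/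
def energyE (Q lam : ℝ) (η α U A φ σ : ℝ → ℝ → ℝ) (t : ℝ) : ℝ :=
  ∫ θ in Ioc (0 : ℝ) (2 * π),
    (1 / Real.sqrt (α t θ)) *
      (calE lam α U A φ σ t θ
        + (1 / 4) * α t θ * Q ^ 2 * exp (2 * (η t θ + lam * φ t θ - U t θ)))

/-- The energy `Ẽ(t)`. -/
def energyEt (lam : ℝ) (α U A φ σ : ℝ → ℝ → ℝ) (t : ℝ) : ℝ :=
  ∫ θ in Ioc (0 : ℝ) (2 * π), calE lam α U A φ σ t θ / Real.sqrt (α t θ)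

/-- The timelike convergence condition (TCC) for the Gowdy symmetric IIA system. -/
def TCC (Q lam Tm Tp : ℝ) (η α U φ σ : ℝ → ℝ → ℝ) : Prop :=
  ∀ t ∈ Ioo Tm Tp, ∀ θ : ℝ,
    (pt φ t θ) ^ 2 + exp (2 * lam * φ t θ) * (pt σ t θ) ^ 2
      ≥ (1 / 2) * α t θ * Q ^ 2 * exp (2 * (η t θ + lam * φ t θ - U t θ))

/-! ### Calculus of smooth functions on a time strip -/

/-- `f` is jointly smooth on the strip `(a, b) × ℝ`. -/
def StripSmooth (a b : ℝ) (f : ℝ → ℝ → ℝ) : Prop :=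
  ContDiffOn ℝ (⊤ : ℕ∞) (fun p : ℝ × ℝ => f p.1 p.2) (Ioo a b ×ˢ (univ : Set ℝ))

theorem isOpen_strip (a b : ℝ) : IsOpen (Ioo a b ×ˢ (univ : Set ℝ)) :=
  isOpen_Ioo.prod isOpen_univ

namespace StripSmooth

variable {a b : ℝ} {f g : ℝ → ℝ → ℝ}

theorem contDiffAt (hf : StripSmooth a b f) {t : ℝ} (ht : t ∈ Ioo a b) (θ : ℝ) :
    ContDiffAt ℝ (⊤ : ℕ∞) (fun p : ℝ × ℝ => f p.1 p.2) (t, θ) :=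
  ContDiffOn.contDiffAt hf ((isOpen_strip a b).mem_nhds ⟨ht, mem_univ _⟩)

theorem hasFDerivAt (hf : StripSmooth a b f) {t : ℝ} (ht : t ∈ Ioo a b) (θ : ℝ) :
    HasFDerivAt (fun p : ℝ × ℝ => f p.1 p.2)
      (fderiv ℝ (fun p : ℝ × ℝ => f p.1 p.2) (t, θ)) (t, θ) :=
  ((hf.contDiffAt ht θ).differentiableAt (by simp)).hasFDerivAt

theorem hasDerivAt_fst (hf : StripSmooth a b f) {t : ℝ} (ht : t ∈ Ioo a b) (θ : ℝ) :
    HasDerivAt (fun s => f s θ) (fderiv ℝ (fun p : ℝ × ℝ => f p.1 p.2) (t, θ) (1, 0)) t :=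
  (hf.hasFDerivAt ht θ).comp_hasDerivAt (f := fun s => (s, θ)) t ((hasDerivAt_id t).prodMk (hasDerivAt_const t θ))

theorem hasDerivAt_snd (hf : StripSmooth a b f) {t : ℝ} (ht : t ∈ Ioo a b) (θ : ℝ) :
    HasDerivAt (fun x => f t x) (fderiv ℝ (fun p : ℝ × ℝ => f p.1 p.2) (t, θ) (0, 1)) θ :=
  (hf.hasFDerivAt ht θ).comp_hasDerivAt (f := fun x => (t, x)) θ ((hasDerivAt_const θ t).prodMk (hasDerivAt_id θ))

theorem pt_eq (hf : StripSmooth a b f) {t : ℝ} (ht : t ∈ Ioo a b) (θ : ℝ) :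
    pt f t θ = fderiv ℝ (fun p : ℝ × ℝ => f p.1 p.2) (t, θ) (1, 0) :=
  (hf.hasDerivAt_fst ht θ).deriv

theorem pth_eq (hf : StripSmooth a b f) {t : ℝ} (ht : t ∈ Ioo a b) (θ : ℝ) :
    pth f t θ = fderiv ℝ (fun p : ℝ × ℝ => f p.1 p.2) (t, θ) (0, 1) :=
  (hf.hasDerivAt_snd ht θ).deriv

theorem hasDerivAt_pt (hf : StripSmooth a b f) {t : ℝ} (ht : t ∈ Ioo a b) (θ : ℝ) :
    HasDerivAt (fun s => f s θ) (pt f t θ) t := by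
  rw [hf.pt_eq ht]; exact hf.hasDerivAt_fst ht θ

theorem hasDerivAt_pth (hf : StripSmooth a b f) {t : ℝ} (ht : t ∈ Ioo a b) (θ : ℝ) :
    HasDerivAt (fun x => f t x) (pth f t θ) θ := by
  rw [hf.pth_eq ht]; exact hf.hasDerivAt_snd ht θ

theorem contDiffOn_fderiv (hf : StripSmooth a b f) :
    ContDiffOn ℝ (⊤ : ℕ∞) (fderiv ℝ (fun p : ℝ × ℝ => f p.1 p.2))
      (Ioo a b ×ˢ (univ : Set ℝ)) :=
  ContDiffOn.fderiv_of_isOpen hf (isOpen_strip a b) (by simp)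

protected theorem pt (hf : StripSmooth a b f) : StripSmooth a b (pt f) :=
  (hf.contDiffOn_fderiv.clm_apply contDiffOn_const).congr
    fun p hp => hf.pt_eq hp.1 p.2

protected theorem pth (hf : StripSmooth a b f) : StripSmooth a b (pth f) :=
  (hf.contDiffOn_fderiv.clm_apply contDiffOn_const).congr
    fun p hp => hf.pth_eq hp.1 p.2

/-- Equality of mixed partial derivatives. -/
theorem pt_pth_comm (hf : StripSmooth a b f) {t : ℝ} (ht : t ∈ Ioo a b) (θ : ℝ) :
    pt (pth f) t θ = pth (pt f) t θ := by
  have hmem : Ioo a b ×ˢ (univ : Set ℝ) ∈ nhds (t, θ) :=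
    (isOpen_strip a b).mem_nhds ⟨ht, mem_univ _⟩
  have hd : DifferentiableAt ℝ (fderiv ℝ (fun p : ℝ × ℝ => f p.1 p.2)) (t, θ) :=
    (hf.contDiffOn_fderiv.contDiffAt hmem).differentiableAt (by simp)
  have key : ∀ v w : ℝ × ℝ, fderiv ℝ (fun q => fderiv ℝ (fun p : ℝ × ℝ => f p.1 p.2) q v) (t, θ) w
      = fderiv ℝ (fderiv ℝ (fun p : ℝ × ℝ => f p.1 p.2)) (t, θ) w v := by
    intro v w
    rw [fderiv_clm_apply hd (differentiableAt_const v)]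
    simp
  have hsymm := (hf.contDiffAt ht θ).isSymmSndFDerivAt (by
    rw [minSmoothness_of_isRCLikeNormedField]
    exact WithTop.coe_le_coe.2 (le_top : (2 : ℕ∞) ≤ ⊤))
  rw [hf.pth.pt_eq ht, hf.pt.pth_eq ht]
  have e1 : (fun p : ℝ × ℝ => pth f p.1 p.2) =ᶠ[nhds (t, θ)]
      fun q => fderiv ℝ (fun p : ℝ × ℝ => f p.1 p.2) q (0, 1) := by
    filter_upwards [hmem] with p hp using hf.pth_eq hp.1 p.2
  have e2 : (fun p : ℝ × ℝ => pt f p.1 p.2) =ᶠ[nhds (t, θ)]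
      fun q => fderiv ℝ (fun p : ℝ × ℝ => f p.1 p.2) q (1, 0) := by
    filter_upwards [hmem] with p hp using hf.pt_eq hp.1 p.2
  rw [e1.fderiv_eq, e2.fderiv_eq, key, key]
  exact hsymm _ _

theorem continuous_slice (hf : StripSmooth a b f) {t : ℝ} (ht : t ∈ Ioo a b) :
    Continuous (fun θ => f t θ) :=
  continuous_iff_continuousAt.2 fun θ => (hf.hasDerivAt_pth ht θ).continuousAt

theorem integrableOn_slice (hf : StripSmooth a b f) {t : ℝ} (ht : t ∈ Ioo a b) (c d : ℝ) :
    IntegrableOn (fun θ => f t θ) (Ioc c d) :=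
  ((hf.continuous_slice ht).integrableOn_Icc).mono_set Ioc_subset_Icc_self

/-- Differentiation under the integral sign; the dominating function is the maximum of `|∂ₜ f|`
over a compact rectangle. -/
theorem hasDerivAt_integral (hf : StripSmooth a b f) {t : ℝ} (ht : t ∈ Ioo a b) (c d : ℝ) :
    HasDerivAt (fun s => ∫ θ in Ioc c d, f s θ) (∫ θ in Ioc c d, pt f t θ) t := by
  obtain ⟨t₁, h1, h1'⟩ := exists_between ht.1
  obtain ⟨t₂, h2, h2'⟩ := exists_between ht.2
  have hsub : Icc t₁ t₂ ⊆ Ioo a b := fun s hs => ⟨h1.trans_le hs.1, hs.2.trans_lt h2'⟩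
  have hcont : ContinuousOn (fun p : ℝ × ℝ => pt f p.1 p.2) (Icc t₁ t₂ ×ˢ Icc c d) :=
    (ContDiffOn.continuousOn hf.pt).mono (prod_mono hsub (subset_univ _))
  obtain ⟨C, hC⟩ := (isCompact_Icc.prod isCompact_Icc).exists_bound_of_continuousOn hcont
  refine (hasDerivAt_integral_of_dominated_loc_of_deriv_le (bound := fun _ => C)
    (F' := fun s θ => pt f s θ) (Icc_mem_nhds h1' h2) ?_ ?_ ?_ ?_ ?_ ?_).2
  · filter_upwards [isOpen_Ioo.mem_nhds ht] with s hs
    exact (hf.continuous_slice hs).aestronglyMeasurable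
  · exact hf.integrableOn_slice ht c d
  · exact (hf.pt.continuous_slice ht).aestronglyMeasurable
  · filter_upwards [ae_restrict_mem measurableSet_Ioc] with θ hθ s hs
    exact hC (s, θ) ⟨hs, Ioc_subset_Icc_self hθ⟩
  · exact integrable_const C
  · exact Eventually.of_forall fun θ s hs => hf.hasDerivAt_pt (hsub hs) θ

/-- The integral of a `θ`-derivative over a period vanishes. -/
theorem integral_pth_eq_zero (hf : StripSmooth a b f) {t : ℝ} (ht : t ∈ Ioo a b)
    (hper : ∀ θ, f t (θ + 2 * π) = f t θ) :
    ∫ θ in Ioc (0 : ℝ) (2 * π), pth f t θ = 0 := by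
  rw [← intervalIntegral.integral_of_le (by positivity),
    intervalIntegral.integral_eq_sub_of_hasDerivAt (fun θ _ => hf.hasDerivAt_pth ht θ)
      ((hf.pth.continuous_slice ht).intervalIntegrable _ _)]
  have := hper 0
  rw [zero_add] at this
  rw [this, sub_self]

end StripSmooth

theorem pt_periodic {f : ℝ → ℝ → ℝ} (h : ∀ t θ, f t (θ + 2 * π) = f t θ) (t θ : ℝ) :
    pt f t (θ + 2 * π) = pt f t θ := by
  simp only [pt, h]

theorem pth_periodic {f : ℝ → ℝ → ℝ} (h : ∀ t θ, f t (θ + 2 * π) = f t θ) (t θ : ℝ) :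
    pth f t (θ + 2 * π) = pth f t θ := by
  have := deriv_comp_add_const (fun x => f t x) (2 * π) θ
  simp only [h] at this
  exact this.symm

/-! ### The local energy identity -/

/-- The integrand of `energyE`. -/
def energyDensity (Q lam : ℝ) (η α U A φ σ : ℝ → ℝ → ℝ) (t θ : ℝ) : ℝ :=
  (1 / Real.sqrt (α t θ)) *
      (calE lam α U A φ σ t θ
        + (1 / 4) * α t θ * Q ^ 2 * exp (2 * (η t θ + lam * φ t θ - U t θ)))

/-- The energy flux in the `θ`-direction. -/
def energyFlux (lam : ℝ) (α U A φ σ : ℝ → ℝ → ℝ) (t θ : ℝ) : ℝ :=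
  Real.sqrt (α t θ) * (2 * (pt U t θ * pth U t θ)
    + exp (4 * U t θ) / (2 * t ^ 2) * (pt A t θ * pth A t θ)
    + (1 / 2) * (pt φ t θ * pth φ t θ + exp (2 * lam * φ t θ) * (pt σ t θ * pth σ t θ)))

/-- The integrand of `-dE/dt`. -/
def dissipation (lam : ℝ) (α U A φ σ : ℝ → ℝ → ℝ) (t θ : ℝ) : ℝ :=
  (1 / (Real.sqrt (α t θ) * t)) *
    (2 * (pt U t θ) ^ 2
      + exp (4 * U t θ) / (2 * t ^ 2) * α t θ * (pth A t θ) ^ 2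
      + (pt φ t θ) ^ 2 / 2
      + exp (2 * lam * φ t θ) / 2 * (pt σ t θ) ^ 2)

section

variable {Q lam a b : ℝ} {η α U A φ σ : ℝ → ℝ → ℝ}

theorem stripSmooth_energyDensity (ha : 0 < a) (hη : StripSmooth a b η) (hα : StripSmooth a b α)
    (hU : StripSmooth a b U) (hA : StripSmooth a b A) (hφ : StripSmooth a b φ)
    (hσ : StripSmooth a b σ) (hpos : ∀ t ∈ Ioo a b, ∀ θ, 0 < α t θ) :
    StripSmooth a b (energyDensity Q lam η α U A φ σ) := by
  have hUt := hU.pt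
  have hUx := hU.pth
  have hAt := hA.pt
  have hAx := hA.pth
  have hφt := hφ.pt
  have hφx := hφ.pth
  have hσt := hσ.pt
  have hσx := hσ.pth
  have h0 : ∀ p ∈ Ioo a b ×ˢ (univ : Set ℝ), α p.1 p.2 ≠ 0 := fun p hp => (hpos _ hp.1 _).ne'
  have h1 : ∀ p ∈ Ioo a b ×ˢ (univ : Set ℝ), √(α p.1 p.2) ≠ 0 :=
    fun p hp => (Real.sqrt_pos.2 (hpos _ hp.1 _)).ne'
  have h2 : ∀ p ∈ Ioo a b ×ˢ (univ : Set ℝ), 4 * p.1 ^ 2 ≠ 0 := fun p hp => by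
    have := ha.trans hp.1.1
    positivity
  unfold StripSmooth energyDensity calE at *
  fun_prop (disch := assumption)

theorem stripSmooth_energyFlux (ha : 0 < a) (hα : StripSmooth a b α)
    (hU : StripSmooth a b U) (hA : StripSmooth a b A) (hφ : StripSmooth a b φ)
    (hσ : StripSmooth a b σ) (hpos : ∀ t ∈ Ioo a b, ∀ θ, 0 < α t θ) :
    StripSmooth a b (energyFlux lam α U A φ σ) := by
  have hUt := hU.pt
  have hUx := hU.pth
  have hAt := hA.pt
  have hAx := hA.pth
  have hφt := hφ.pt
  have hφx := hφ.pth
  have hσt := hσ.pt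
  have hσx := hσ.pth
  have h0 : ∀ p ∈ Ioo a b ×ˢ (univ : Set ℝ), α p.1 p.2 ≠ 0 := fun p hp => (hpos _ hp.1 _).ne'
  have h2 : ∀ p ∈ Ioo a b ×ˢ (univ : Set ℝ), 2 * p.1 ^ 2 ≠ 0 := fun p hp => by
    have := ha.trans hp.1.1
    positivity
  unfold StripSmooth energyFlux at *
  fun_prop (disch := assumption)

theorem stripSmooth_dissipation (ha : 0 < a) (hα : StripSmooth a b α)
    (hU : StripSmooth a b U) (hA : StripSmooth a b A) (hφ : StripSmooth a b φ)
    (hσ : StripSmooth a b σ) (hpos : ∀ t ∈ Ioo a b, ∀ θ, 0 < α t θ) :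
    StripSmooth a b (dissipation lam α U A φ σ) := by
  have hUt := hU.pt
  have hAx := hA.pth
  have hφt := hφ.pt
  have hσt := hσ.pt
  have h0 : ∀ p ∈ Ioo a b ×ˢ (univ : Set ℝ), α p.1 p.2 ≠ 0 := fun p hp => (hpos _ hp.1 _).ne'
  have h1 : ∀ p ∈ Ioo a b ×ˢ (univ : Set ℝ), √(α p.1 p.2) * p.1 ≠ 0 :=
    fun p hp => mul_ne_zero (Real.sqrt_pos.2 (hpos _ hp.1 _)).ne' (ha.trans hp.1.1).ne'
  have h2 : ∀ p ∈ Ioo a b ×ˢ (univ : Set ℝ), 2 * p.1 ^ 2 ≠ 0 := fun p hp => by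
    have := ha.trans hp.1.1
    positivity
  unfold StripSmooth dissipation at *
  fun_prop (disch := assumption)

/-- The local form of the energy identity: along solutions, `∂ₜ(density) = ∂_θ(flux) - dissipation`.
The contribution of `∂ₜ α` cancels against that of `∂ₜ η` by the `t`-constraint and the equation
for `α`, and the source terms proportional to `Q²` in the equations for `U` and `φ` cancel against
the derivative of the exponential in the density. -/
theorem pt_energyDensity (ha : 0 < a) (hη : StripSmooth a b η) (hα : StripSmooth a b α)
    (hU : StripSmooth a b U) (hA : StripSmooth a b A) (hφ : StripSmooth a b φ)
    (hσ : StripSmooth a b σ) (hsys : IsGowdyIIA Q lam (Ioo a b) η α U A φ σ)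
    {t : ℝ} (ht : t ∈ Ioo a b) (θ : ℝ) :
    pt (energyDensity Q lam η α U A φ σ) t θ
      = pth (energyFlux lam α U A φ σ) t θ - dissipation lam α U A φ σ t θ := by
  have ht0 : t ≠ 0 := (ha.trans ht.1).ne'
  have hαp := hsys.alpha_pos t ht θ
  have hr : 0 < √(α t θ) := Real.sqrt_pos.2 hαp
  have hr2 : √(α t θ) ^ 2 = α t θ := Real.sq_sqrt hαp.le
  have dsq : HasDerivAt (fun s => √(α s θ)) (pt α t θ / (2 * √(α t θ))) t :=
    (hα.hasDerivAt_pt ht θ).sqrt hαp.ne'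
  have dα := hα.hasDerivAt_pt ht θ
  have dU := hU.hasDerivAt_pt ht θ
  have dφ := hφ.hasDerivAt_pt ht θ
  have dη := hη.hasDerivAt_pt ht θ
  have dUt := hU.pt.hasDerivAt_pt ht θ
  have dUx := hU.pth.hasDerivAt_pt ht θ
  have dAt := hA.pt.hasDerivAt_pt ht θ
  have dAx := hA.pth.hasDerivAt_pt ht θ
  have dφt := hφ.pt.hasDerivAt_pt ht θ
  have dφx := hφ.pth.hasDerivAt_pt ht θ
  have dσt := hσ.pt.hasDerivAt_pt ht θ
  have dσx := hσ.pth.hasDerivAt_pt ht θ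
  rw [hU.pt_pth_comm ht] at dUx
  rw [hA.pt_pth_comm ht] at dAx
  rw [hφ.pt_pth_comm ht] at dφx
  rw [hσ.pt_pth_comm ht] at dσx
  have de4 : HasDerivAt (fun s => exp (4 * U s θ) / (4 * s ^ 2)) _ t :=
    (dU.const_mul 4).exp.div (((hasDerivAt_id t).pow 2).const_mul 4)
      (mul_ne_zero four_ne_zero (pow_ne_zero 2 ht0))
  have de2 := (dφ.const_mul (2 * lam)).exp
  have deP := (((dη.add (dφ.const_mul lam)).sub dU).const_mul 2).exp
  have dens : HasDerivAt (fun s => energyDensity Q lam η α U A φ σ s θ) _ t :=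
    ((hasDerivAt_const t (1 : ℝ)).div dsq hr.ne').mul
      (((((dUt.pow 2).add (dα.mul (dUx.pow 2))).add
        (de4.mul ((dAt.pow 2).add (dα.mul (dAx.pow 2))))).add
        ((((dφt.pow 2).add (dα.mul (dφx.pow 2))).add
          (de2.mul ((dσt.pow 2).add (dα.mul (dσx.pow 2))))).const_mul (1 / 4))).add
        (((dα.const_mul (1 / 4)).mul_const (Q ^ 2)).mul deP))
  have fsq : HasDerivAt (fun x => √(α t x)) (pth α t θ / (2 * √(α t θ))) θ :=
    (hα.hasDerivAt_pth ht θ).sqrt hαp.ne'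
  have fU := hU.hasDerivAt_pth ht θ
  have fφ := hφ.hasDerivAt_pth ht θ
  have fUt := hU.pt.hasDerivAt_pth ht θ
  have fUx := hU.pth.hasDerivAt_pth ht θ
  have fAt := hA.pt.hasDerivAt_pth ht θ
  have fAx := hA.pth.hasDerivAt_pth ht θ
  have fφt := hφ.pt.hasDerivAt_pth ht θ
  have fφx := hφ.pth.hasDerivAt_pth ht θ
  have fσt := hσ.pt.hasDerivAt_pth ht θ
  have fσx := hσ.pth.hasDerivAt_pth ht θ
  have fe4 := (fU.const_mul 4).exp.div_const (2 * t ^ 2)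
  have fe2 := (fφ.const_mul (2 * lam)).exp
  have flux : HasDerivAt (fun x => energyFlux lam α U A φ σ t x) _ θ :=
    fsq.mul ((((fUt.mul fUx).const_mul 2).add (fe4.mul (fAt.mul fAx))).add
      (((fφt.mul fφx).add (fe2.mul (fσt.mul fσx))).const_mul (1 / 2)))
  have h1 : pt (energyDensity Q lam η α U A φ σ) t θ = _ := dens.deriv
  have h2 : pth (energyFlux lam α U A φ σ) t θ = _ := flux.deriv
  rw [h1, h2]
  have ct := hsys.constraint_t t ht θ
  have ca := hsys.constraint_α t ht θ
  have eU := hsys.evol_U t ht θ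
  have eA := hsys.evol_A t ht θ
  have eφ := hsys.evol_φ t ht θ
  have eσ := hsys.evol_σ t ht θ
  have hexp : exp (2 * lam * φ t θ + 2 * (η t θ - U t θ))
      = exp (2 * (η t θ + lam * φ t θ - U t θ)) := by ring_nf
  rw [hexp] at ct ca eU eφ
  rw [div_eq_iff ht0] at ct
  rw [sub_eq_iff_eq_add] at eU eA eφ eσ
  rw [eU, eA, eφ, eσ, ct, ca]
  simp only [calE, dissipation, Pi.pow_apply, Pi.add_apply, Pi.sub_apply, Pi.mul_apply,
    Pi.div_apply, id_eq]
  generalize exp (2 * (η t θ + lam * φ t θ - U t θ)) = P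
  generalize exp (4 * U t θ) = e4
  generalize exp (2 * lam * φ t θ) = e2
  generalize pth (pth U) t θ = Uxx
  generalize pth (pth A) t θ = Axx
  generalize pth (pth φ) t θ = φxx
  generalize pth (pth σ) t θ = σxx
  generalize pth (pt U) t θ = Utx
  generalize pth (pt A) t θ = Atx
  generalize pth (pt φ) t θ = φtx
  generalize pth (pt σ) t θ = σtx
  generalize pt U t θ = Ut
  generalize pt A t θ = At
  generalize pt φ t θ = φt
  generalize pt σ t θ = σt
  generalize pth U t θ = Ux
  generalize pth A t θ = Ax
  generalize pth φ t θ = φx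
  generalize pth σ t θ = σx
  generalize pth α t θ = αx
  generalize √(α t θ) = r at *
  simp only [← hr2]
  field_simp
  ring

end

/-! ### Sign of the dissipation and comparison with the density -/

theorem dissipation_nonneg {lam t θ : ℝ} {α U A φ σ : ℝ → ℝ → ℝ} (ht : 0 < t)
    (hα : 0 < α t θ) : 0 ≤ dissipation lam α U A φ σ t θ := by
  unfold dissipation
  positivity

theorem energyDensity_nonneg {Q lam t θ : ℝ} {η α U A φ σ : ℝ → ℝ → ℝ}
    (hα : 0 < α t θ) : 0 ≤ energyDensity Q lam η α U A φ σ t θ := by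
  unfold energyDensity calE
  positivity

theorem dissipation_le {Q lam t θ : ℝ} {η α U A φ σ : ℝ → ℝ → ℝ} (ht : 0 < t)
    (hα : 0 < α t θ) :
    dissipation lam α U A φ σ t θ ≤ 4 / t * energyDensity Q lam η α U A φ σ t θ := by
  have hr : 0 < √(α t θ) := Real.sqrt_pos.2 hα
  -- The difference is a sum of nonnegative terms: every term of the dissipation occurs in
  -- `4 / t` times the density with at least the same coefficient.
  have key : 4 / t * energyDensity Q lam η α U A φ σ t θ - dissipation lam α U A φ σ t θ
      = 1 / (√(α t θ) * t) * (2 * pt U t θ ^ 2 + 4 * α t θ * pth U t θ ^ 2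
        + exp (4 * U t θ) / t ^ 2 * (pt A t θ ^ 2 + α t θ * pth A t θ ^ 2 / 2)
        + pt φ t θ ^ 2 / 2 + α t θ * pth φ t θ ^ 2
        + exp (2 * lam * φ t θ) * (pt σ t θ ^ 2 / 2 + α t θ * pth σ t θ ^ 2)
        + α t θ * Q ^ 2 * exp (2 * (η t θ + lam * φ t θ - U t θ))) := by
    unfold energyDensity dissipation calE
    field_simp
    ring
  rw [← sub_nonneg, key]
  positivity

/-! ### The energy -/

section

variable {Q lam a b : ℝ} {η α U A φ σ : ℝ → ℝ → ℝ}

theorem hasDerivAt_energyE (ha : 0 < a) (hη : StripSmooth a b η) (hα : StripSmooth a b α)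
    (hU : StripSmooth a b U) (hA : StripSmooth a b A) (hφ : StripSmooth a b φ)
    (hσ : StripSmooth a b σ) (hsys : IsGowdyIIA Q lam (Ioo a b) η α U A φ σ)
    (pα : ∀ t θ, α t (θ + 2 * π) = α t θ) (pU : ∀ t θ, U t (θ + 2 * π) = U t θ)
    (pA : ∀ t θ, A t (θ + 2 * π) = A t θ) (pφ : ∀ t θ, φ t (θ + 2 * π) = φ t θ)
    (pσ : ∀ t θ, σ t (θ + 2 * π) = σ t θ) {t : ℝ} (ht : t ∈ Ioo a b) :
    HasDerivAt (energyE Q lam η α U A φ σ)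
      (-∫ θ in Ioc (0 : ℝ) (2 * π), dissipation lam α U A φ σ t θ) t := by
  have hpos := hsys.alpha_pos
  have hdens : StripSmooth a b (energyDensity Q lam η α U A φ σ) :=
    stripSmooth_energyDensity ha hη hα hU hA hφ hσ hpos
  have hflux : StripSmooth a b (energyFlux lam α U A φ σ) :=
    stripSmooth_energyFlux ha hα hU hA hφ hσ hpos
  have hdiss : StripSmooth a b (dissipation lam α U A φ σ) :=
    stripSmooth_dissipation ha hα hU hA hφ hσ hpos
  have h := hdens.hasDerivAt_integral ht 0 (2 * π)
  have hper : ∀ θ, energyFlux lam α U A φ σ t (θ + 2 * π) = energyFlux lam α U A φ σ t θ := by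
    intro θ
    simp only [energyFlux, pα, pU, pφ, pt_periodic pU, pt_periodic pA, pt_periodic pφ,
      pt_periodic pσ, pth_periodic pU, pth_periodic pA, pth_periodic pφ, pth_periodic pσ]
  have hval : ∫ θ in Ioc (0 : ℝ) (2 * π), pt (energyDensity Q lam η α U A φ σ) t θ
      = -∫ θ in Ioc (0 : ℝ) (2 * π), dissipation lam α U A φ σ t θ := by
    simp only [pt_energyDensity ha hη hα hU hA hφ hσ hsys ht]
    rw [integral_sub (hflux.pth.integrableOn_slice ht _ _) (hdiss.integrableOn_slice ht _ _),
      hflux.integral_pth_eq_zero ht hper, zero_sub]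
  rw [hval] at h
  exact h

end

/-- The conclusions that follow from the differential inequalities `-(4 / t) E ≤ dE/dt ≤ 0` alone. -/
theorem decay_of_deriv_bounds {E D : ℝ → ℝ} {a b c : ℝ} (ha : 0 < a) (hac : a < c) (hcb : c < b)
    (hE : ∀ t ∈ Ioo a b, HasDerivAt E (D t) t) (hE0 : ∀ t ∈ Ioo a b, 0 ≤ E t)
    (hD0 : ∀ t ∈ Ioo a b, D t ≤ 0) (hD4 : ∀ t ∈ Ioo a b, -(4 / t) * E t ≤ D t) :
    (∀ t ∈ Ico c b, E t ≤ E c) ∧ (∀ t ∈ Ioc a c, E t ≤ E c * (c / t) ^ 4)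
    ∧ (∃ C : ℝ, ∀ t ∈ Ioo a b, |E t| ≤ C)
    ∧ ∃ L : ℝ, Tendsto E (nhdsWithin a (Ioi a)) (nhds L) := by
  have hcmem : c ∈ Ioo a b := ⟨hac, hcb⟩
  have hanti : AntitoneOn E (Ioo a b) := by
    refine antitoneOn_of_deriv_nonpos (convex_Ioo a b)
      (fun t ht => (hE t ht).continuousAt.continuousWithinAt) ?_ ?_
    · rw [interior_Ioo]
      exact fun t ht => (hE t ht).differentiableAt.differentiableWithinAt
    · rw [interior_Ioo]
      intro t ht
      rw [(hE t ht).deriv]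
      exact hD0 t ht
  have hd4 : ∀ t ∈ Ioo a b,
      HasDerivAt (fun s => s ^ 4 * E s) (4 * t ^ 3 * E t + t ^ 4 * D t) t := by
    intro t ht
    have h := (hasDerivAt_pow 4 t).mul (hE t ht)
    norm_num at h
    exact h
  -- The lower bound on `dE/dt` says that `t⁴ E(t)` is nondecreasing.
  have hmono : MonotoneOn (fun s => s ^ 4 * E s) (Ioo a b) := by
    refine monotoneOn_of_deriv_nonneg (convex_Ioo a b)
      (fun t ht => (hd4 t ht).continuousAt.continuousWithinAt) ?_ ?_
    · rw [interior_Ioo]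
      exact fun t ht => (hd4 t ht).differentiableAt.differentiableWithinAt
    · rw [interior_Ioo]
      intro t ht
      rw [(hd4 t ht).deriv]
      have htp : 0 < t := ha.trans ht.1
      have h := mul_le_mul_of_nonneg_left (hD4 t ht) (pow_pos htp 4).le
      have e : t ^ 4 * (-(4 / t) * E t) = -(4 * t ^ 3 * E t) := by field_simp
      linarith
  have h1 : ∀ t ∈ Ico c b, E t ≤ E c := fun t ht =>
    hanti hcmem ⟨hac.trans_le ht.1, ht.2⟩ ht.1
  have h2 : ∀ t ∈ Ioc a c, E t ≤ E c * (c / t) ^ 4 := by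
    intro t ht
    have htp : 0 < t := ha.trans ht.1
    have h : t ^ 4 * E t ≤ c ^ 4 * E c := hmono ⟨ht.1, ht.2.trans_lt hcb⟩ hcmem ht.2
    rw [div_pow, ← mul_div_assoc, le_div_iff₀ (pow_pos htp 4)]
    linarith
  have h3 : ∀ t ∈ Ioo a b, E t ≤ E c * (c / a) ^ 4 := by
    intro t ht
    have hEc := hE0 c hcmem
    rcases le_total t c with htc | hct
    · refine (h2 t ⟨ht.1, htc⟩).trans (mul_le_mul_of_nonneg_left ?_ hEc)
      have := ha.trans ht.1
      have := ha.trans hac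
      have := ht.1.le
      gcongr
    · exact (h1 t ⟨hct, ht.2⟩).trans
        (le_mul_of_one_le_right hEc (one_le_pow₀ ((one_le_div ha).2 hac.le)))
  refine ⟨h1, h2, ⟨_, fun t ht => (abs_of_nonneg (hE0 t ht)).trans_le (h3 t ht)⟩, _,
    hanti.tendsto_nhdsWithin_Ioo_right ⟨c, hcmem⟩ ⟨E c * (c / a) ^ 4, ?_⟩⟩
  rintro _ ⟨t, ht, rfl⟩
  exact h3 t ht

theorem energy_decay (Q lam Tm Tp t_i : ℝ) (hQ : Q ≠ 0) (hTm : 0 < Tm) (hti : Tm < t_i)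
    (hTp : t_i < Tp) (G : GowdySolution Q lam Tm Tp) :
    (∀ t ∈ Ioo Tm Tp,
      HasDerivAt (energyE Q lam G.η G.α G.U G.A G.φ G.σ)
        (-∫ θ in Ioc (0 : ℝ) (2 * π),
          (1 / (Real.sqrt (G.α t θ) * t)) *
            (2 * (pt G.U t θ) ^ 2
              + exp (4 * G.U t θ) / (2 * t ^ 2) * G.α t θ * (pth G.A t θ) ^ 2
              + (pt G.φ t θ) ^ 2 / 2
              + exp (2 * lam * G.φ t θ) / 2 * (pt G.σ t θ) ^ 2)) t
      ∧ deriv (energyE Q lam G.η G.α G.U G.A G.φ G.σ) t ≤ 0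
      ∧ deriv (energyE Q lam G.η G.α G.U G.A G.φ G.σ) t ≥ -(4 / t) * (energyE Q lam G.η G.α G.U G.A G.φ G.σ) t)
    ∧ (∀ t ∈ Ico t_i Tp, energyE Q lam G.η G.α G.U G.A G.φ G.σ t ≤ energyE Q lam G.η G.α G.U G.A G.φ G.σ t_i)
    ∧ (∀ t ∈ Ioc Tm t_i, energyE Q lam G.η G.α G.U G.A G.φ G.σ t ≤ energyE Q lam G.η G.α G.U G.A G.φ G.σ t_i * (t_i / t) ^ 4)
    ∧ (∃ C : ℝ, ∀ t ∈ Ioo Tm Tp, |energyE Q lam G.η G.α G.U G.A G.φ G.σ t| ≤ C)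
    ∧ (∃ Em : ℝ, Tendsto (energyE Q lam G.η G.α G.U G.A G.φ G.σ) (nhdsWithin Tm (Ioi Tm)) (nhds Em)) := by
  have sη : StripSmooth Tm Tp G.η := G.smooth _ (by simp)
  have sα : StripSmooth Tm Tp G.α := G.smooth _ (by simp)
  have sU : StripSmooth Tm Tp G.U := G.smooth _ (by simp)
  have sA : StripSmooth Tm Tp G.A := G.smooth _ (by simp)
  have sφ : StripSmooth Tm Tp G.φ := G.smooth _ (by simp)
  have sσ : StripSmooth Tm Tp G.σ := G.smooth _ (by simp)
  have hpos := G.sys.alpha_pos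
  have hder : ∀ t ∈ Ioo Tm Tp, HasDerivAt (energyE Q lam G.η G.α G.U G.A G.φ G.σ)
      (-∫ θ in Ioc (0 : ℝ) (2 * π), dissipation lam G.α G.U G.A G.φ G.σ t θ) t := fun t ht =>
    hasDerivAt_energyE hTm sη sα sU sA sφ sσ G.sys (G.periodic _ (by simp))
      (G.periodic _ (by simp)) (G.periodic _ (by simp)) (G.periodic _ (by simp))
      (G.periodic _ (by simp)) ht
  have hE0 : ∀ t ∈ Ioo Tm Tp, 0 ≤ energyE Q lam G.η G.α G.U G.A G.φ G.σ t := fun t ht =>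
    integral_nonneg fun θ => energyDensity_nonneg (hpos t ht θ)
  have hD0 : ∀ t ∈ Ioo Tm Tp,
      (-∫ θ in Ioc (0 : ℝ) (2 * π), dissipation lam G.α G.U G.A G.φ G.σ t θ) ≤ 0 := fun t ht =>
    neg_nonpos.2 (integral_nonneg fun θ => dissipation_nonneg (hTm.trans ht.1) (hpos t ht θ))
  have hD4 : ∀ t ∈ Ioo Tm Tp, -(4 / t) * energyE Q lam G.η G.α G.U G.A G.φ G.σ t
      ≤ -∫ θ in Ioc (0 : ℝ) (2 * π), dissipation lam G.α G.U G.A G.φ G.σ t θ := by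
    intro t ht
    have sdens : StripSmooth Tm Tp (energyDensity Q lam G.η G.α G.U G.A G.φ G.σ) :=
      stripSmooth_energyDensity hTm sη sα sU sA sφ sσ hpos
    have sdiss : StripSmooth Tm Tp (dissipation lam G.α G.U G.A G.φ G.σ) :=
      stripSmooth_dissipation hTm sα sU sA sφ sσ hpos
    have h : ∫ θ in Ioc (0 : ℝ) (2 * π), dissipation lam G.α G.U G.A G.φ G.σ t θ
        ≤ ∫ θ in Ioc (0 : ℝ) (2 * π),
          4 / t * energyDensity Q lam G.η G.α G.U G.A G.φ G.σ t θ :=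
      integral_mono (sdiss.integrableOn_slice ht _ _)
        ((sdens.integrableOn_slice ht _ _).const_mul _)
        fun θ => dissipation_le (hTm.trans ht.1) (hpos t ht θ)
    rw [integral_const_mul] at h
    rw [neg_mul, neg_le_neg_iff]
    exact h
  refine ⟨fun t ht => ⟨hder t ht, ?_, ?_⟩, decay_of_deriv_bounds hTm hti hTp hder hE0 hD0 hD4⟩
  · rw [(hder t ht).deriv]
    exact hD0 t ht
  · rw [(hder t ht).deriv]
    exact hD4 t ht

end
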